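/- Fix d ≥ 1, an input x ∈ ℝ^d, and σ_w, σ_b > 0. Let F = n^{-1/2} · σ_w · Σ_{j=1}^n w_j τ(σ_w⟨w_j^{(0)}, x⟩ + σ_b b_j^{(0)}) + σ_b b, where the w_j, the coordinates w_{j,i}^{(0)} of the vectors w_j^{(0)} ∈ ℝ^d, the b_j^{(0)}, and b are all i.i.d. standard Gaussian random variables, and τ ∈ C²(ℝ) satisfies |τ(x)| ≤ a + b|x|^γ, |τ'(x)| ≤ a + b|x|^γ and |τ''(x)| ≤ a + b|x|^γ for all x ∈ ℝ, for some constants a, b, γ ≥ 0. Set Γ = (σ_w²‖x‖² + σ_b²)^{1/2} and σ² = σ_w² · E[τ²(ΓZ)] + σ_b² with Z ~ N(0,1), and let N ~ N(0, σ²). Then for every n ≥ 1, d_{W1}(F, N) ≤ (1/√n) · √(8/(σ²π)) · σ_w² · √(Γ² + Γ⁴·(2 + √(3(1 + 2Γ² + 3Γ⁴)))) · ‖a + b|ΓZ|^γ‖_{L⁴}², where ‖X‖_{L⁴} = (E[X⁴])^{1/4}. -/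

import Mathlib

open MeasureTheory ProbabilityTheory Real

/-- The 1-Wasserstein distance between two distributions:
`sup_h |E[h(X)] − E[h(Y)]|` over 1-Lipschitz functions `h`. -/
noncomputable def dW1 {E : Type*} [MeasurableSpace E] [PseudoMetricSpace E]
    (μ ν : Measure E) : ℝ :=
  ⨆ h : {h : E → ℝ // LipschitzWith 1 h}, |(∫ x, h.1 x ∂μ) - ∫ x, h.1 x ∂ν|

/-!
Conditionally on the hidden layer, `F` is a centred Gaussian whose variance is the random variable
`A = σ_w² n⁻¹ ∑ⱼ τ²(ΓZⱼ) + σ_b²`, with `Z₁, …, Zₙ` i.i.d. standard Gaussian and `E[A] = σ²`.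
Coupling `√A · Z` with `σ Z` and using `|√A - σ| ≤ |A - σ²| / σ` gives
`d_{W1}(F, N) ≤ √(2 / (πσ²)) E|A - σ²| ≤ √(2 / (πσ²)) √Var A`, where `Var A = σ_w⁴ n⁻¹ Var τ²(ΓZ)`.

The last variance is controlled by the Gaussian Poincaré inequality
`Var f(Z) ≤ v E[f'(Z)²]` for `Z ∼ N(m, v)`. Cauchy–Schwarz on the segment from `m` to `z` gives
`(f(z) - f(m))² ≤ |z - m| ∫ f'(t)² dt`, the integral being over that segment; after exchanging
integrals, the weight of `f'(t)²` is `E[|Z - m|; Z beyond t]`, which is `v` times the density of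
`Z` at `t`.
-/

open Filter Set Topology
open scoped ENNReal NNReal

section GaussianPoincare

variable {m : ℝ} {v : ℝ≥0}

lemma hasDerivAt_gaussianPDFReal (m : ℝ) (v : ℝ≥0) (x : ℝ) :
    HasDerivAt (gaussianPDFReal m v) (-((x - m) / v) * gaussianPDFReal m v x) x := by
  have hexp : HasDerivAt (fun x : ℝ ↦ -(x - m) ^ 2 / (2 * v)) (-((x - m) / v)) x := by
    convert! (((hasDerivAt_id x).sub_const m).pow 2).neg.div_const (2 * v : ℝ) using 1
    simp only [id, Nat.cast_ofNat]
    ring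
  rw [gaussianPDFReal_def]
  convert! hexp.exp.const_mul (√(2 * π * v))⁻¹ using 1
  ring

lemma tendsto_gaussianPDFReal_atTop (m : ℝ) (v : ℝ≥0) :
    Tendsto (gaussianPDFReal m v) atTop (𝓝 0) := by
  rcases eq_or_ne v 0 with rfl | hv
  · rw [gaussianPDFReal_zero_var]
    exact tendsto_const_nhds
  have hv' : (0 : ℝ) < 2 * v := by positivity
  have hexp : Tendsto (fun x : ℝ ↦ -(x - m) ^ 2 / (2 * v)) atTop atBot := by
    refine Tendsto.atBot_div_const hv' (tendsto_neg_atTop_atBot.comp ?_)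
    exact (tendsto_pow_atTop two_ne_zero).comp (tendsto_atTop_add_const_right _ (-m) tendsto_id)
  simpa only [gaussianPDFReal_def, mul_zero, Function.comp_def] using
    (tendsto_exp_atBot.comp hexp).const_mul (√(2 * π * v))⁻¹

lemma setLIntegral_Ioi_abs_sub_gaussianReal (hv : v ≠ 0) {t : ℝ} (ht : m ≤ t) :
    ∫⁻ z in Ioi t, ENNReal.ofReal |z - m| ∂gaussianReal m v = v * gaussianPDF m v t := by
  have hderiv : ∀ z ∈ Ici t, HasDerivAt (fun z ↦ -(v * gaussianPDFReal m v z))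
      ((z - m) * gaussianPDFReal m v z) z := fun z _ ↦ by
    convert! ((hasDerivAt_gaussianPDFReal m v z).const_mul (v : ℝ)).neg using 1
    field_simp
  have hnonneg : ∀ z ∈ Ioi t, 0 ≤ (z - m) * gaussianPDFReal m v z := fun z hz ↦
    mul_nonneg (sub_nonneg.2 (ht.trans hz.le)) (gaussianPDFReal_nonneg m v z)
  have hlim : Tendsto (fun z ↦ -(v * gaussianPDFReal m v z)) atTop (𝓝 0) := by
    simpa using ((tendsto_gaussianPDFReal_atTop m v).const_mul (v : ℝ)).neg
  rw [gaussianReal_of_var_ne_zero m hv, setLIntegral_withDensity_eq_setLIntegral_mul _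
    (measurable_gaussianPDF m v) (by fun_prop) measurableSet_Ioi]
  calc ∫⁻ z in Ioi t, gaussianPDF m v z * ENNReal.ofReal |z - m|
      = ∫⁻ z in Ioi t, ENNReal.ofReal ((z - m) * gaussianPDFReal m v z) :=
        setLIntegral_congr_fun measurableSet_Ioi fun z hz ↦ by
          have hz' : 0 ≤ z - m := sub_nonneg.2 (ht.trans (mem_Ioi.1 hz).le)
          rw [abs_of_nonneg hz', mul_comm, gaussianPDF, ← ENNReal.ofReal_mul hz']
    _ = ENNReal.ofReal (∫ z in Ioi t, (z - m) * gaussianPDFReal m v z) :=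
        (ofReal_integral_eq_lintegral_ofReal (integrableOn_Ioi_deriv_of_nonneg' hderiv hnonneg hlim)
          (ae_restrict_of_forall_mem measurableSet_Ioi hnonneg)).symm
    _ = v * gaussianPDF m v t := by
        rw [integral_Ioi_of_hasDerivAt_of_nonneg' hderiv hnonneg hlim, zero_sub, neg_neg,
          ENNReal.ofReal_mul v.coe_nonneg, ENNReal.ofReal_coe_nnreal, gaussianPDF]

lemma setLIntegral_Iio_abs_sub_gaussianReal (hv : v ≠ 0) {t : ℝ} (ht : t ≤ m) :
    ∫⁻ z in Iio t, ENNReal.ofReal |z - m| ∂gaussianReal m v = v * gaussianPDF m v t := by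
  have hreflect : MeasurePreserving (fun z ↦ 2 * m - z) (gaussianReal m v) (gaussianReal m v) :=
    ⟨by fun_prop, by rw [gaussianReal_map_const_sub]; congr 1; ring⟩
  have hpre : (fun z ↦ 2 * m - z) ⁻¹' Ioi (2 * m - t) = Iio t := by ext; simp
  calc ∫⁻ z in Iio t, ENNReal.ofReal |z - m| ∂gaussianReal m v
      = ∫⁻ z in Iio t, ENNReal.ofReal |2 * m - z - m| ∂gaussianReal m v := by
        refine lintegral_congr fun z ↦ ?_
        rw [abs_sub_comm]
        ring_nf
    _ = ∫⁻ z in Ioi (2 * m - t), ENNReal.ofReal |z - m| ∂gaussianReal m v := by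
        rw [← hreflect.setLIntegral_comp_preimage measurableSet_Ioi (by fun_prop), hpre]
    _ = v * gaussianPDF m v t := by
        rw [setLIntegral_Ioi_abs_sub_gaussianReal hv (by linarith), gaussianPDF, gaussianPDF,
          gaussianPDFReal_def]
        ring_nf

lemma integral_abs_sub_gaussianReal (m : ℝ) (v : ℝ≥0) :
    ∫ z, |z - m| ∂gaussianReal m v = √(2 * v / π) := by
  rcases eq_or_ne v 0 with rfl | hv
  · simp
  have hpdf : (gaussianPDFReal m v m) = (√(2 * π * v))⁻¹ := by simp [gaussianPDFReal_def]
  have hlint : ∫⁻ z, ENNReal.ofReal |z - m| ∂gaussianReal m v = 2 * (v * gaussianPDF m v m) := by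
    have := nullSingletonClass_gaussianReal (μ := m) hv
    rw [← lintegral_add_compl _ (measurableSet_Iio (a := m)), compl_Iio,
      ← restrict_Ioi_eq_restrict_Ici, setLIntegral_Iio_abs_sub_gaussianReal hv le_rfl,
      setLIntegral_Ioi_abs_sub_gaussianReal hv le_rfl, two_mul]
  rw [integral_eq_lintegral_of_nonneg_ae (ae_of_all _ fun z ↦ abs_nonneg _) (by fun_prop), hlint]
  simp only [ENNReal.toReal_mul, ENNReal.toReal_ofNat, ENNReal.coe_toReal, toReal_gaussianPDF, hpdf]
  rw [eq_comm, Real.sqrt_eq_iff_mul_self_eq (by positivity) (by positivity), ← sq, mul_pow,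
    mul_pow, inv_pow, Real.sq_sqrt (by positivity)]
  field_simp

lemma setLIntegral_mem_uIoc_abs_sub_gaussianReal (hv : v ≠ 0) (t : ℝ) :
    ∫⁻ z in {z | t ∈ uIoc m z}, ENNReal.ofReal |z - m| ∂gaussianReal m v
      = v * gaussianPDF m v t := by
  have := nullSingletonClass_gaussianReal (μ := m) hv
  rcases lt_or_ge m t with ht | ht
  · have hset : {z | t ∈ uIoc m z} = Ici t := by
      ext z
      simp [mem_uIoc, ht, ht.not_ge]
    rw [hset, ← restrict_Ioi_eq_restrict_Ici, setLIntegral_Ioi_abs_sub_gaussianReal hv ht.le]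
  · have hset : {z | t ∈ uIoc m z} = Iio t := by
      ext z
      simp [mem_uIoc, ht, ht.not_gt]
    rw [hset, setLIntegral_Iio_abs_sub_gaussianReal hv ht]

theorem lintegral_abs_sub_mul_setLIntegral_uIoc_gaussianReal (m : ℝ) (v : ℝ≥0) {h : ℝ → ℝ≥0∞}
    (hh : Measurable h) :
    ∫⁻ z, (ENNReal.ofReal |z - m| * ∫⁻ t in uIoc m z, h t) ∂gaussianReal m v
      = v * ∫⁻ t, h t ∂gaussianReal m v := by
  rcases eq_or_ne v 0 with rfl | hv
  · simp [lintegral_dirac]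
  have hset : MeasurableSet {p : ℝ × ℝ | p.2 ∈ uIoc m p.1} :=
    (measurableSet_lt (measurable_const.min measurable_fst) measurable_snd).inter
      (measurableSet_le measurable_snd (measurable_const.max measurable_fst))
  have hslice (t : ℝ) : MeasurableSet {z | t ∈ uIoc m z} :=
    hset.preimage (measurable_id.prodMk measurable_const)
  have hmeas : Measurable fun p : ℝ × ℝ ↦
      ENNReal.ofReal |p.1 - m| * {p : ℝ × ℝ | p.2 ∈ uIoc m p.1}.indicator (fun p ↦ h p.2) p :=
    Measurable.mul (by fun_prop) ((hh.comp measurable_snd).indicator hset)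
  calc ∫⁻ z, (ENNReal.ofReal |z - m| * ∫⁻ t in uIoc m z, h t) ∂gaussianReal m v
      = ∫⁻ z, (∫⁻ t, ENNReal.ofReal |z - m| * (uIoc m z).indicator h t) ∂gaussianReal m v :=
        lintegral_congr fun z ↦ by
          rw [lintegral_const_mul _ (hh.indicator measurableSet_uIoc),
            lintegral_indicator measurableSet_uIoc]
    _ = ∫⁻ t, (∫⁻ z, ENNReal.ofReal |z - m| * (uIoc m z).indicator h t ∂gaussianReal m v) :=
        lintegral_lintegral_swap hmeas.aemeasurable
    _ = ∫⁻ t, (∫⁻ z in {z | t ∈ uIoc m z}, ENNReal.ofReal |z - m| ∂gaussianReal m v) * h t := by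
        refine lintegral_congr fun t ↦ ?_
        rw [← lintegral_mul_const _ (by fun_prop), ← lintegral_indicator (hslice t)]
        simp only [indicator, mem_ofPred_eq, mul_ite, mul_zero]
    _ = ∫⁻ t, gaussianPDF m v t * (v * h t) := by
        refine lintegral_congr fun t ↦ ?_
        rw [setLIntegral_mem_uIoc_abs_sub_gaussianReal hv, mul_comm (v : ℝ≥0∞), mul_assoc]
    _ = v * ∫⁻ t, h t ∂gaussianReal m v := by
        rw [gaussianReal_of_var_ne_zero m hv, ← lintegral_const_mul _ hh,
          lintegral_withDensity_eq_lintegral_mul _ (measurable_gaussianPDF m v) (by fun_prop)]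
        rfl

lemma sq_lintegral_le_measure_univ_mul_lintegral_sq {α : Type*} [MeasurableSpace α] {μ : Measure α}
    {g : α → ℝ≥0∞} (hg : AEMeasurable g μ) :
    (∫⁻ t, g t ∂μ) ^ 2 ≤ μ univ * ∫⁻ t, g t ^ 2 ∂μ := by
  have hsqrt (c : ℝ≥0∞) : (c ^ (1 / 2 : ℝ)) ^ 2 = c := by
    rw [← ENNReal.rpow_natCast, ← ENNReal.rpow_mul]
    norm_num
  have hcs := ENNReal.lintegral_mul_le_Lp_mul_Lq μ Real.HolderConjugate.two_two
    (aemeasurable_const (b := 1)) hg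
  simpa [mul_pow, hsqrt, ← one_div] using pow_le_pow_left₀ zero_le hcs 2

lemma enorm_sub_le_setLIntegral_uIoc_enorm_deriv {f : ℝ → ℝ} (hf : Differentiable ℝ f) (a b : ℝ) :
    ‖f b - f a‖ₑ ≤ ∫⁻ t in uIoc a b, ‖deriv f t‖ₑ := by
  by_cases hint : IntervalIntegrable (deriv f) volume a b
  · rw [← intervalIntegral.integral_deriv_eq_sub (fun x _ ↦ hf x) hint,
      ← ofReal_norm, intervalIntegral.norm_intervalIntegral_eq, ofReal_norm]
    exact enorm_integral_le_lintegral_enorm _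
  · rw [intervalIntegrable_iff, IntegrableOn, Integrable,
      and_iff_right (measurable_deriv f).aestronglyMeasurable, hasFiniteIntegral_iff_enorm,
      not_lt, top_le_iff] at hint
    exact hint ▸ le_top

lemma enorm_sub_sq_le_mul_setLIntegral_deriv_sq {f : ℝ → ℝ} (hf : Differentiable ℝ f) (a b : ℝ) :
    ‖f b - f a‖ₑ ^ 2 ≤ ENNReal.ofReal |b - a| * ∫⁻ t in uIoc a b, ‖deriv f t‖ₑ ^ 2 :=
  calc ‖f b - f a‖ₑ ^ 2 ≤ (∫⁻ t in uIoc a b, ‖deriv f t‖ₑ) ^ 2 :=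
        pow_le_pow_left₀ zero_le (enorm_sub_le_setLIntegral_uIoc_enorm_deriv hf a b) 2
    _ ≤ volume.restrict (uIoc a b) univ * ∫⁻ t in uIoc a b, ‖deriv f t‖ₑ ^ 2 :=
        sq_lintegral_le_measure_univ_mul_lintegral_sq (measurable_deriv f).enorm.aemeasurable
    _ = ENNReal.ofReal |b - a| * ∫⁻ t in uIoc a b, ‖deriv f t‖ₑ ^ 2 := by
        rw [Measure.restrict_apply_univ, Real.volume_uIoc]

theorem lintegral_enorm_sub_sq_le_gaussianReal (m : ℝ) (v : ℝ≥0) {f : ℝ → ℝ}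
    (hf : Differentiable ℝ f) :
    ∫⁻ z, ‖f z - f m‖ₑ ^ 2 ∂gaussianReal m v ≤ v * ∫⁻ z, ‖deriv f z‖ₑ ^ 2 ∂gaussianReal m v :=
  (lintegral_mono fun z ↦ enorm_sub_sq_le_mul_setLIntegral_deriv_sq hf m z).trans_eq <|
    lintegral_abs_sub_mul_setLIntegral_uIoc_gaussianReal m v
      ((measurable_deriv f).enorm.pow_const 2)

lemma lintegral_enorm_sq_eq_ofReal_integral_sq {α : Type*} [MeasurableSpace α] {μ : Measure α}
    {f : α → ℝ} (hf : MemLp f 2 μ) :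
    ∫⁻ z, ‖f z‖ₑ ^ 2 ∂μ = ENNReal.ofReal (∫ z, f z ^ 2 ∂μ) := by
  rw [ofReal_integral_eq_lintegral_ofReal hf.integrable_sq (ae_of_all _ fun z ↦ sq_nonneg _)]
  refine lintegral_congr fun z ↦ ?_
  rw [← enorm_pow, enorm_of_nonneg (sq_nonneg _)]

theorem memLp_two_gaussianReal_of_deriv {f : ℝ → ℝ} (hf : Differentiable ℝ f)
    (hf' : MemLp (deriv f) 2 (gaussianReal m v)) : MemLp f 2 (gaussianReal m v) := by
  have hsub : MemLp (fun z ↦ f z - f m) 2 (gaussianReal m v) := by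
    refine ⟨(hf.continuous.sub continuous_const).aestronglyMeasurable, ?_⟩
    rw [eLpNorm_lt_top_iff_lintegral_rpow_enorm_lt_top two_ne_zero ENNReal.ofNat_ne_top]
    simp only [ENNReal.toReal_ofNat, ENNReal.rpow_ofNat]
    refine (lintegral_enorm_sub_sq_le_gaussianReal m v hf).trans_lt ?_
    rw [lintegral_enorm_sq_eq_ofReal_integral_sq hf']
    exact ENNReal.mul_lt_top ENNReal.coe_lt_top ENNReal.ofReal_lt_top
  simpa only [Pi.add_def, sub_add_cancel] using hsub.add (memLp_const (f m))

theorem variance_le_mul_integral_deriv_sq_gaussianReal {f : ℝ → ℝ} (hf : Differentiable ℝ f)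
    (hf' : MemLp (deriv f) 2 (gaussianReal m v)) :
    Var[f; gaussianReal m v] ≤ v * ∫ z, deriv f z ^ 2 ∂gaussianReal m v := by
  have hsub : MemLp (fun z ↦ f z - f m) 2 (gaussianReal m v) :=
    (memLp_two_gaussianReal_of_deriv hf hf').sub (memLp_const (f m))
  have hdev : ∫ z, (f z - f m) ^ 2 ∂gaussianReal m v
      ≤ v * ∫ z, deriv f z ^ 2 ∂gaussianReal m v := by
    have h := lintegral_enorm_sub_sq_le_gaussianReal m v hf
    rwa [lintegral_enorm_sq_eq_ofReal_integral_sq hsub,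
      lintegral_enorm_sq_eq_ofReal_integral_sq hf', ← ENNReal.ofReal_coe_nnreal,
      ← ENNReal.ofReal_mul v.coe_nonneg, ENNReal.ofReal_le_ofReal_iff (by positivity)] at h
  calc Var[f; gaussianReal m v] = Var[fun z ↦ f z - f m; gaussianReal m v] :=
        (variance_sub_const hf.continuous.aestronglyMeasurable _).symm
    _ ≤ ∫ z, (f z - f m) ^ 2 ∂gaussianReal m v :=
        variance_le_expectation_sq hsub.aestronglyMeasurable
    _ ≤ v * ∫ z, deriv f z ^ 2 ∂gaussianReal m v := hdev

lemma deriv_sq_eq_two_mul_mul_deriv {f : ℝ → ℝ} (hf : Differentiable ℝ f) :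
    deriv (fun z ↦ f z ^ 2) = fun z ↦ 2 * (f z * deriv f z) := by
  ext z
  rw [((hf z).hasDerivAt.fun_pow 2).deriv]
  ring

lemma memLp_sq_gaussianReal_of_mul_deriv {f : ℝ → ℝ} (hf : Differentiable ℝ f)
    (hf' : MemLp (fun z ↦ f z * deriv f z) 2 (gaussianReal m v)) :
    MemLp (fun z ↦ f z ^ 2) 2 (gaussianReal m v) := by
  refine memLp_two_gaussianReal_of_deriv (hf.fun_pow 2) ?_
  rw [deriv_sq_eq_two_mul_mul_deriv hf]
  exact hf'.const_mul 2

lemma variance_sq_le_gaussianReal {f : ℝ → ℝ} (hf : Differentiable ℝ f)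
    (hf' : MemLp (fun z ↦ f z * deriv f z) 2 (gaussianReal m v)) :
    Var[fun z ↦ f z ^ 2; gaussianReal m v]
      ≤ 4 * v * ∫ z, (f z * deriv f z) ^ 2 ∂gaussianReal m v := by
  have hderiv := deriv_sq_eq_two_mul_mul_deriv hf
  have hpoincare := variance_le_mul_integral_deriv_sq_gaussianReal (hf.fun_pow 2)
    (by rw [hderiv]; exact hf'.const_mul 2)
  simp_rw [hderiv, mul_pow (2 : ℝ), integral_const_mul] at hpoincare
  linarith

end GaussianPoincare

lemma gaussianReal_zero_one_map_const_mul (c : ℝ) :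
    (gaussianReal 0 1).map (c * ·) = gaussianReal 0 (c ^ 2).toNNReal := by
  rw [gaussianReal_map_const_mul, mul_zero, mul_one, Real.toNNReal_of_nonneg (sq_nonneg c)]

lemma map_sqrt_mul_gaussianReal (r : ℝ) :
    (gaussianReal 0 1).map (√r * ·) = gaussianReal 0 r.toNNReal := by
  rw [gaussianReal_zero_one_map_const_mul, Real.sq_sqrt', ← Real.coe_toNNReal',
    Real.toNNReal_coe]

section Wasserstein

variable {Ω : Type*} [MeasurableSpace Ω] {P : Measure Ω}

lemma dW1_map_le_integral_dist {E : Type*} [MeasurableSpace E] [PseudoMetricSpace E]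
    [OpensMeasurableSpace E] {X Y : Ω → E} (hX : AEMeasurable X P) (hY : AEMeasurable Y P)
    (hXY : Integrable (fun ω ↦ dist (X ω) (Y ω)) P) :
    dW1 (P.map X) (P.map Y) ≤ ∫ ω, dist (X ω) (Y ω) ∂P := by
  have : Nonempty {h : E → ℝ // LipschitzWith 1 h} := ⟨⟨fun _ ↦ 0, LipschitzWith.const' 0⟩⟩
  refine ciSup_le fun ⟨h, hh⟩ ↦ ?_
  have hmeas : Measurable h := hh.continuous.measurable
  have hdist (ω : Ω) : ‖h (X ω) - h (Y ω)‖ ≤ dist (X ω) (Y ω) := by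
    simpa [Real.dist_eq] using hh.dist_le_mul (X ω) (Y ω)
  have hdiff : Integrable (fun ω ↦ h (X ω) - h (Y ω)) P :=
    hXY.mono' ((hmeas.comp_aemeasurable hX).sub (hmeas.comp_aemeasurable hY)).aestronglyMeasurable
      (ae_of_all _ hdist)
  rw [integral_map hX hmeas.aestronglyMeasurable, integral_map hY hmeas.aestronglyMeasurable]
  by_cases hint : Integrable (fun ω ↦ h (X ω)) P
  · have hint' : Integrable (fun ω ↦ h (Y ω)) P := by
      simpa [Pi.sub_def] using hint.sub hdiff
    rw [← integral_sub hint hint', ← Real.norm_eq_abs]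
    exact norm_integral_le_of_norm_le hXY (ae_of_all _ hdist)
  · -- Neither `h ∘ X` nor `h ∘ Y` is integrable, so both integrals take the junk value `0`.
    have hint' : ¬ Integrable (fun ω ↦ h (Y ω)) P := fun hint' ↦
      hint (by simpa [Pi.add_def] using hdiff.add hint')
    rw [integral_undef hint, integral_undef hint', sub_zero, abs_zero]
    exact integral_nonneg fun _ ↦ dist_nonneg

lemma dW1_map_mul_le [IsProbabilityMeasure P] {ν : Measure ℝ} [SFinite ν]
    (hν : Integrable id ν) {S : Ω → ℝ} {s : ℝ} (hS : Integrable (fun ω ↦ S ω - s) P) :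
    dW1 ((ν.prod P).map fun p ↦ S p.2 * p.1) (ν.map (s * ·))
      ≤ (∫ z, |z| ∂ν) * ∫ ω, |S ω - s| ∂P := by
  have hcoupling : ν.map (s * ·) = (ν.prod P).map fun p ↦ s * p.1 := by
    have h := Measure.map_map (μ := ν.prod P) (g := (s * ·)) (by fun_prop) measurable_fst
    rwa [measurePreserving_fst.map_eq] at h
  have hdist (p : ℝ × Ω) : dist (S p.2 * p.1) (s * p.1) = |p.1| * |S p.2 - s| := by
    rw [Real.dist_eq, ← sub_mul, abs_mul, mul_comm]
  have hS_meas : AEMeasurable S P := by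
    simpa [Pi.add_def] using hS.aemeasurable.add_const s
  have hdist_int : Integrable (fun p : ℝ × Ω ↦ dist (S p.2 * p.1) (s * p.1)) (ν.prod P) := by
    simpa only [hdist, id] using hν.abs.mul_prod hS.abs
  calc dW1 ((ν.prod P).map fun p ↦ S p.2 * p.1) (ν.map (s * ·))
      ≤ ∫ p, dist (S p.2 * p.1) (s * p.1) ∂ν.prod P := by
        rw [hcoupling]
        exact dW1_map_le_integral_dist (hS_meas.comp_snd.mul measurable_fst.aemeasurable)
          (by fun_prop) hdist_int
    _ = (∫ z, |z| ∂ν) * ∫ ω, |S ω - s| ∂P := by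
        simp_rw [hdist]
        exact integral_prod_mul (fun z ↦ |z|) (fun ω ↦ |S ω - s|)

lemma abs_sqrt_sub_sqrt_le_div (r : ℝ) {s : ℝ} (hs : 0 < s) :
    |√r - √s| ≤ |r - s| / √s := by
  rw [le_div_iff₀ (Real.sqrt_pos.2 hs)]
  calc |√r - √s| * √s ≤ |√r - √s| * (√r + √s) := by
        gcongr
        exact le_add_of_nonneg_left (Real.sqrt_nonneg r)
    _ = |√r ^ 2 - √s ^ 2| := by
        rw [← abs_of_nonneg (a := √r + √s) (by positivity), ← abs_mul]
        ring_nf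
    _ ≤ |r - s| := by
        rw [Real.sq_sqrt', Real.sq_sqrt']
        exact abs_max_sub_max_le_abs r s 0

theorem dW1_map_sqrt_mul_gaussianReal_le [IsProbabilityMeasure P] {A : Ω → ℝ}
    (hA : Integrable A P) {v : ℝ≥0} (hv : 0 < v) :
    dW1 (((gaussianReal 0 1).prod P).map fun p ↦ √(A p.2) * p.1) (gaussianReal 0 v)
      ≤ √(2 / (v * π)) * ∫ ω, |A ω - v| ∂P := by
  have habs : ∫ z, |z| ∂gaussianReal 0 1 = √(2 / π) := by
    simpa using integral_abs_sub_gaussianReal 0 1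
  have hgauss : gaussianReal 0 v = (gaussianReal 0 1).map (√v * ·) := by
    rw [map_sqrt_mul_gaussianReal, Real.toNNReal_coe]
  have hsqrt_le (ω : Ω) : |√(A ω) - √v| ≤ |A ω - v| / √v := abs_sqrt_sub_sqrt_le_div (A ω) hv
  have hA_dev : Integrable (fun ω ↦ |A ω - v| / √v) P :=
    (hA.sub (integrable_const _)).abs.div_const √v
  have hsqrt_dev : Integrable (fun ω ↦ √(A ω) - √v) P :=
    hA_dev.mono' (hA.aemeasurable.sqrt.sub_const _).aestronglyMeasurable (ae_of_all _ hsqrt_le)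
  calc dW1 (((gaussianReal 0 1).prod P).map fun p ↦ √(A p.2) * p.1) (gaussianReal 0 v)
      ≤ √(2 / π) * ∫ ω, |√(A ω) - √v| ∂P := by
        rw [hgauss, ← habs]
        exact dW1_map_mul_le ((memLp_id_gaussianReal 1).integrable le_rfl) hsqrt_dev
    _ ≤ √(2 / π) * ∫ ω, |A ω - v| / √v ∂P :=
        mul_le_mul_of_nonneg_left (integral_mono hsqrt_dev.abs hA_dev hsqrt_le)
          (Real.sqrt_nonneg _)
    _ = √(2 / (v * π)) * ∫ ω, |A ω - v| ∂P := by
        rw [integral_div, mul_comm (v : ℝ) π, ← div_div, Real.sqrt_div' _ v.coe_nonneg]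
        ring

lemma integral_abs_sub_integral_le_sqrt_variance [IsProbabilityMeasure P] {X : Ω → ℝ}
    (hX : MemLp X 2 P) : ∫ ω, |X ω - P[X]| ∂P ≤ √Var[X; P] := by
  have hdev : MemLp (fun ω ↦ |X ω - P[X]|) 2 P := by
    simpa using! (hX.sub (memLp_const (∫ ω, X ω ∂P))).abs
  refine Real.le_sqrt_of_sq_le ?_
  have hvar := variance_nonneg (fun ω ↦ |X ω - P[X]|) P
  rw [variance_eq_sub hdev, sub_nonneg] at hvar
  simpa [variance_eq_integral hX.aestronglyMeasurable.aemeasurable] using hvar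

end Wasserstein

section LinearForm

variable {ι : Type*} [Fintype ι]

lemma map_sum_pi_gaussianReal (m : ι → ℝ) (v : ι → ℝ≥0) :
    (Measure.pi fun i ↦ gaussianReal (m i) (v i)).map (fun p ↦ ∑ i, p i)
      = gaussianReal (∑ i, m i) (∑ i, v i) := by
  refine Measure.ext_of_charFun (funext fun t ↦ ?_)
  simp only [charFun_map_sum_pi_eq_prod, Finset.prod_apply, charFun_gaussianReal,
    ← Complex.exp_sum]
  push_cast
  rw [Finset.sum_sub_distrib, Finset.mul_sum, Finset.sum_mul, Finset.sum_mul, Finset.sum_div]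

lemma map_sum_mul_pi_gaussianReal (c : ι → ℝ) :
    (Measure.pi fun _ : ι ↦ gaussianReal 0 1).map (fun p ↦ ∑ i, c i * p i)
      = gaussianReal 0 (∑ i, c i ^ 2).toNNReal := by
  have hscale := measurePreserving_pi (fun _ : ι ↦ gaussianReal 0 1)
    (fun i ↦ gaussianReal 0 (c i ^ 2).toNNReal) (f := fun i z ↦ c i * z)
    fun i ↦ ⟨by fun_prop, gaussianReal_zero_one_map_const_mul (c i)⟩
  have hsum := map_sum_pi_gaussianReal 0 fun i ↦ (c i ^ 2).toNNReal
  simp only [Pi.zero_apply, Finset.sum_const_zero] at hsum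
  rw [Real.toNNReal_sum_of_nonneg fun i _ ↦ sq_nonneg (c i), ← hsum, ← hscale.map_eq,
    Measure.map_map (by fun_prop) hscale.measurable]
  rfl

lemma map_mul_sum_add_mul_gaussianReal (r s : ℝ) (c : ι → ℝ) :
    ((Measure.pi fun _ : ι ↦ gaussianReal 0 1).prod (gaussianReal 0 1)).map
        (fun p ↦ r * ∑ i, p.1 i * c i + s * p.2)
      = gaussianReal 0 (r ^ 2 * ∑ i, c i ^ 2 + s ^ 2).toNNReal := by
  have hweights : MeasurePreserving (fun p : ι → ℝ ↦ r * ∑ i, p i * c i)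
      (Measure.pi fun _ ↦ gaussianReal 0 1) (gaussianReal 0 (r ^ 2 * ∑ i, c i ^ 2).toNNReal) := by
    refine ⟨by fun_prop, ?_⟩
    have h := map_sum_mul_pi_gaussianReal fun i ↦ r * c i
    simpa only [mul_pow, Finset.mul_sum, mul_assoc, mul_comm (c _)] using h
  have hbias : MeasurePreserving (s * ·) (gaussianReal 0 1) (gaussianReal 0 (s ^ 2).toNNReal) :=
    ⟨by fun_prop, gaussianReal_zero_one_map_const_mul s⟩
  have hconv := gaussianReal_conv_gaussianReal (m₁ := 0) (m₂ := 0)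
    (v₁ := (r ^ 2 * ∑ i, c i ^ 2).toNNReal) (v₂ := (s ^ 2).toNNReal)
  rw [add_zero] at hconv
  rw [Real.toNNReal_add (by positivity) (sq_nonneg s), ← hconv, Measure.conv,
    ← (hweights.prod hbias).map_eq, Measure.map_map (by fun_prop) (hweights.prod hbias).measurable]
  rfl

end LinearForm

lemma map_prod_congr_of_forall_map_eq {Ω₁ Ω₂ Ω E : Type*} [MeasurableSpace Ω₁]
    [MeasurableSpace Ω₂] [MeasurableSpace Ω] [MeasurableSpace E] {μ₁ : Measure Ω₁}
    {μ₂ : Measure Ω₂} {ν : Measure Ω} [SFinite μ₁] [SFinite μ₂] [SFinite ν] {F₁ : Ω₁ × Ω → E}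
    {F₂ : Ω₂ × Ω → E} (hF₁ : Measurable F₁) (hF₂ : Measurable F₂)
    (h : ∀ ω, μ₁.map (fun a ↦ F₁ (a, ω)) = μ₂.map (fun a ↦ F₂ (a, ω))) :
    (μ₁.prod ν).map F₁ = (μ₂.prod ν).map F₂ := by
  refine Measure.ext_of_lintegral _ fun g hg ↦ ?_
  rw [lintegral_map hg hF₁, lintegral_map hg hF₂,
    lintegral_prod_symm' (fun p ↦ g (F₁ p)) (hg.comp hF₁),
    lintegral_prod_symm' (fun p ↦ g (F₂ p)) (hg.comp hF₂)]
  refine lintegral_congr fun ω ↦ ?_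
  have hω := congrArg (fun μ ↦ ∫⁻ e, g e ∂μ) (h ω)
  rwa [lintegral_map hg (by fun_prop), lintegral_map hg (by fun_prop)] at hω

section IIDSum

variable {ι α : Type*} [Fintype ι] [MeasurableSpace α] {ν : Measure α} [IsProbabilityMeasure ν]
  {f : α → ℝ}

lemma memLp_sum_eval_pi {p : ℝ≥0∞} (hf : MemLp f p ν) :
    MemLp (fun y : ι → α ↦ ∑ j, f (y j)) p (Measure.pi fun _ ↦ ν) :=
  memLp_finsetSum _ fun j _ ↦ hf.comp_measurePreserving (measurePreserving_eval _ j)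

lemma integral_sum_eval_pi (hf : Integrable f ν) :
    ∫ y : ι → α, ∑ j, f (y j) ∂Measure.pi (fun _ ↦ ν) = Fintype.card ι * ∫ a, f a ∂ν := by
  have heval (j : ι) : ∫ y : ι → α, f (y j) ∂Measure.pi (fun _ ↦ ν) = ∫ a, f a ∂ν :=
    integral_comp_eval (μ := fun _ ↦ ν) hf.aestronglyMeasurable
  rw [integral_finsetSum _ fun j _ ↦ integrable_comp_eval hf]
  simp [heval]

lemma variance_sum_eval_pi (hf : MemLp f 2 ν) :
    Var[fun y : ι → α ↦ ∑ j, f (y j); Measure.pi fun _ ↦ ν]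
      = Fintype.card ι * Var[f; ν] := by
  have h := variance_sum_pi (ι := ι) (μ := fun _ ↦ ν) (X := fun _ ↦ f) fun _ ↦ hf
  simpa [Finset.sum_fn] using h

end IIDSum

section Envelope

variable {α : Type*} [MeasurableSpace α] {μ : Measure α} {f g h : α → ℝ}

lemma abs_mul_le_sq_of_abs_le {r s t : ℝ} (hr : |r| ≤ t) (hs : |s| ≤ t) : |r * s| ≤ t ^ 2 := by
  rw [abs_mul, sq]
  exact mul_le_mul hr hs (abs_nonneg s) ((abs_nonneg r).trans hr)

lemma memLp_mul_of_abs_le (hf : AEStronglyMeasurable f μ) (hg : AEStronglyMeasurable g μ)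
    (hh : MemLp h 4 μ) (hfh : ∀ a, |f a| ≤ h a) (hgh : ∀ a, |g a| ≤ h a) :
    MemLp (fun a ↦ f a * g a) 2 μ := by
  have : ENNReal.HolderTriple 4 4 2 := ⟨by
    rw [← two_mul, show (4 : ℝ≥0∞) = 2 * 2 by norm_num, ENNReal.mul_inv (by simp) (by simp),
      ENNReal.mul_inv_cancel_left (by simp) (by simp)]⟩
  exact (hh.mono' hg (ae_of_all _ hgh)).mul' (hh.mono' hf (ae_of_all _ hfh))

lemma sqrt_integral_mul_sq_le_of_abs_le (hh : MemLp h 4 μ) (hfh : ∀ a, |f a| ≤ h a)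
    (hgh : ∀ a, |g a| ≤ h a) :
    √(∫ a, (f a * g a) ^ 2 ∂μ) ≤ ((∫ a, h a ^ 4 ∂μ) ^ ((1 : ℝ) / 4)) ^ 2 := by
  have hh_int : Integrable (fun a ↦ h a ^ 4) μ := by
    simpa [Even.pow_abs (by decide : Even 4)] using hh.integrable_norm_pow four_ne_zero
  have hnonneg : 0 ≤ ∫ a, h a ^ 4 ∂μ := integral_nonneg fun a ↦ by positivity
  calc √(∫ a, (f a * g a) ^ 2 ∂μ) ≤ √(∫ a, h a ^ 4 ∂μ) := by
        refine Real.sqrt_le_sqrt (integral_mono_of_nonneg (ae_of_all _ fun a ↦ sq_nonneg _) hh_int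
          (ae_of_all _ fun a ↦ ?_))
        calc (f a * g a) ^ 2 = |f a * g a| ^ 2 := (sq_abs _).symm
          _ ≤ (h a ^ 2) ^ 2 := by gcongr; exact abs_mul_le_sq_of_abs_le (hfh a) (hgh a)
          _ = h a ^ 4 := by ring
    _ = ((∫ a, h a ^ 4 ∂μ) ^ ((1 : ℝ) / 4)) ^ 2 := by
        rw [← Real.rpow_natCast, ← Real.rpow_mul hnonneg, Real.sqrt_eq_rpow]
        norm_num

end Envelope

lemma memLp_const_add_mul_abs_rpow_gaussianReal (a b : ℝ) {γ : ℝ} (hγ : 0 ≤ γ) (m : ℝ) (v p : ℝ≥0) :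
    MemLp (fun z ↦ a + b * |z| ^ γ) p (gaussianReal m v) := by
  refine (memLp_const a).add (MemLp.const_mul ?_ b)
  rcases hγ.eq_or_lt with rfl | hγ_pos
  · simpa only [rpow_zero] using memLp_const 1
  have hγ_ne : (γ.toNNReal : ℝ≥0∞) ≠ 0 := by
    simpa using hγ_pos
  have h := (memLp_id_gaussianReal (μ := m) (v := v) (p * γ.toNNReal)).norm_rpow_div γ.toNNReal
  rwa [ENNReal.coe_toReal, Real.coe_toNNReal γ hγ, ENNReal.coe_mul,
    ENNReal.mul_div_cancel_right hγ_ne ENNReal.coe_ne_top] at h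

section NetworkLaw

/-- The law of the output `n^{-1/2} σ_w ∑ⱼ wⱼ τ(σ_w ⟨wⱼ⁽⁰⁾, x⟩ + σ_b bⱼ⁽⁰⁾) + σ_b b` of a random
network with one hidden layer of width `n`, evaluated at the input `x`. The sample space is the
product of the laws of, in this order, `w`, `w⁽⁰⁾`, `b⁽⁰⁾` and `b`. -/
noncomputable def shallowNetworkLaw {d : ℕ} (n : ℕ) (x : Fin d → ℝ) (σw σb : ℝ) (τ : ℝ → ℝ) :
    Measure ℝ :=
  Measure.map
    (fun ω : (Fin n → ℝ) × (Fin n → (Fin d → ℝ)) × (Fin n → ℝ) × ℝ ↦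
      (√n)⁻¹ * σw * (∑ j, ω.1 j * τ (σw * (∑ i, ω.2.1 j i * x i) + σb * ω.2.2.1 j))
        + σb * ω.2.2.2)
    ((Measure.pi fun _ ↦ gaussianReal 0 1).prod
      ((Measure.pi fun _ ↦ Measure.pi fun _ ↦ gaussianReal 0 1).prod
        ((Measure.pi fun _ ↦ gaussianReal 0 1).prod (gaussianReal 0 1))))

lemma measurePreserving_preactivation {ι κ : Type*} [Fintype ι] [Fintype κ] (c : κ → ℝ)
    (r s : ℝ) :
    MeasurePreserving
      (fun (q : (ι → κ → ℝ) × (ι → ℝ)) j ↦ r * (∑ i, q.1 j i * c i) + s * q.2 j)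
      ((Measure.pi fun _ ↦ Measure.pi fun _ ↦ gaussianReal 0 1).prod
        (Measure.pi fun _ ↦ gaussianReal 0 1))
      (Measure.pi fun _ ↦ gaussianReal 0 (r ^ 2 * ∑ i, c i ^ 2 + s ^ 2).toNNReal) := by
  have hzip := (measurePreserving_arrowProdEquivProdArrow (κ → ℝ) ℝ ι
    (fun _ ↦ Measure.pi fun _ ↦ gaussianReal 0 1) (fun _ ↦ gaussianReal 0 1)).symm
  have hneuron : MeasurePreserving (fun q : (κ → ℝ) × ℝ ↦ r * (∑ i, q.1 i * c i) + s * q.2)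
      ((Measure.pi fun _ ↦ gaussianReal 0 1).prod (gaussianReal 0 1))
      (gaussianReal 0 (r ^ 2 * ∑ i, c i ^ 2 + s ^ 2).toNNReal) :=
    ⟨by fun_prop, map_mul_sum_add_mul_gaussianReal r s c⟩
  exact (measurePreserving_pi _ _ fun _ : ι ↦ hneuron).comp hzip

lemma measurePreserving_outer_inner {α β γ δ : Type*} [MeasurableSpace α] [MeasurableSpace β]
    [MeasurableSpace γ] [MeasurableSpace δ] (μa : Measure α) (μb : Measure β) (μc : Measure γ)
    (μd : Measure δ) [SFinite μa] [SFinite μb] [SFinite μc] [SFinite μd] :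
    MeasurePreserving (fun ω : α × β × γ × δ ↦ ((ω.1, ω.2.2.2), (ω.2.1, ω.2.2.1)))
      (μa.prod (μb.prod (μc.prod μd))) ((μa.prod μd).prod (μb.prod μc)) := by
  have hassoc := (MeasurePreserving.id μa).prod (measurePreserving_prodAssoc μb μc μd).symm
  have hswap := (MeasurePreserving.id μa).prod
    (Measure.measurePreserving_swap (μ := μb.prod μc) (ν := μd))
  exact (measurePreserving_prodAssoc μa μd (μb.prod μc)).symm.comp (hswap.comp hassoc)

theorem shallowNetworkLaw_eq_map_sqrt_mul {d : ℕ} (n : ℕ) (x : Fin d → ℝ) (σw σb : ℝ) {τ : ℝ → ℝ}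
    (hτ : Measurable τ) :
    shallowNetworkLaw n x σw σb τ
      = ((gaussianReal 0 1).prod (Measure.pi fun _ : Fin n ↦
          gaussianReal 0 (σw ^ 2 * ∑ i, x i ^ 2 + σb ^ 2).toNNReal)).map
        fun p ↦ √(((√n)⁻¹ * σw) ^ 2 * ∑ j, τ (p.2 j) ^ 2 + σb ^ 2) * p.1 := by
  set γ₁ := gaussianReal 0 1
  set hidden := Measure.pi fun _ : Fin n ↦
    gaussianReal 0 (σw ^ 2 * ∑ i, x i ^ 2 + σb ^ 2).toNNReal
  let output : ((Fin n → ℝ) × ℝ) × (Fin n → ℝ) → ℝ := fun q ↦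
    (√n)⁻¹ * σw * (∑ j, q.1.1 j * τ (q.2 j)) + σb * q.1.2
  have houtput : Measurable output := by fun_prop
  have hlayers := ((MeasurePreserving.id ((Measure.pi fun _ : Fin n ↦ γ₁).prod γ₁)).prod
    (measurePreserving_preactivation (ι := Fin n) x σw σb)).comp
      (measurePreserving_outer_inner _ (Measure.pi fun _ ↦ Measure.pi fun _ ↦ γ₁)
        (Measure.pi fun _ ↦ γ₁) γ₁)
  calc shallowNetworkLaw n x σw σb τ
      = (((Measure.pi fun _ : Fin n ↦ γ₁).prod γ₁).prod hidden).map output := by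
        rw [← hlayers.map_eq, Measure.map_map houtput hlayers.measurable]
        rfl
    _ = (γ₁.prod hidden).map
          fun p ↦ √(((√n)⁻¹ * σw) ^ 2 * ∑ j, τ (p.2 j) ^ 2 + σb ^ 2) * p.1 := by
        refine map_prod_congr_of_forall_map_eq houtput (by fun_prop) fun y ↦ ?_
        exact (map_mul_sum_add_mul_gaussianReal ((√n)⁻¹ * σw) σb fun j ↦ τ (y j)).trans
          (map_sqrt_mul_gaussianReal _).symm

theorem dW1_shallowNetworkLaw_le_sqrt_variance {d n : ℕ} (hn : n ≠ 0) (x : Fin d → ℝ)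
    (σw σb : ℝ) {τ : ℝ → ℝ} (hτ : Measurable τ) {K v : ℝ≥0}
    (hK : (K : ℝ) = σw ^ 2 * ∑ i, x i ^ 2 + σb ^ 2)
    (hv : (v : ℝ) = σw ^ 2 * ∫ y, τ y ^ 2 ∂gaussianReal 0 K + σb ^ 2) (hv_pos : 0 < v)
    (hτ_sq : MemLp (fun y ↦ τ y ^ 2) 2 (gaussianReal 0 K)) :
    dW1 (shallowNetworkLaw n x σw σb τ) (gaussianReal 0 v)
      ≤ √(2 / (v * π)) * ((√n)⁻¹ * σw ^ 2 * √Var[fun y ↦ τ y ^ 2; gaussianReal 0 K]) := by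
  set hidden := Measure.pi fun _ : Fin n ↦ gaussianReal 0 K
  let S : (Fin n → ℝ) → ℝ := fun y ↦ ∑ j, τ (y j) ^ 2
  have hscale : ((√n)⁻¹ * σw) ^ 2 * n = σw ^ 2 := by
    rw [mul_pow, inv_pow, Real.sq_sqrt n.cast_nonneg]
    field_simp
  have hS : MemLp S 2 hidden := memLp_sum_eval_pi hτ_sq
  have hS_mean : ∫ y, S y ∂hidden = n * ∫ y, τ y ^ 2 ∂gaussianReal 0 K := by
    simpa using! integral_sum_eval_pi (ι := Fin n) (hτ_sq.integrable one_le_two)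
  have hS_var : Var[S; hidden] = n * Var[fun y ↦ τ y ^ 2; gaussianReal 0 K] := by
    simpa using! variance_sum_eval_pi (ι := Fin n) hτ_sq
  have hdev (y : Fin n → ℝ) : |((√n)⁻¹ * σw) ^ 2 * S y + σb ^ 2 - v|
      = ((√n)⁻¹ * σw) ^ 2 * |S y - ∫ y, S y ∂hidden| := by
    rw [hv, hS_mean, ← hscale, mul_assoc, add_sub_add_right_eq_sub, ← mul_sub, abs_mul,
      abs_of_nonneg (sq_nonneg _)]
  have hlaw := shallowNetworkLaw_eq_map_sqrt_mul n x σw σb hτ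
  rw [← hK, Real.toNNReal_coe] at hlaw
  calc dW1 (shallowNetworkLaw n x σw σb τ) (gaussianReal 0 v)
      ≤ √(2 / (v * π)) * ∫ y, |((√n)⁻¹ * σw) ^ 2 * S y + σb ^ 2 - v| ∂hidden := by
        rw [hlaw]
        exact dW1_map_sqrt_mul_gaussianReal_le
          (((hS.integrable one_le_two).const_mul _).add (integrable_const _)) hv_pos
    _ ≤ √(2 / (v * π)) * (((√n)⁻¹ * σw) ^ 2 * √Var[S; hidden]) := by
        simp_rw [hdev, integral_const_mul]
        gcongr
        exact integral_abs_sub_integral_le_sqrt_variance hS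
    _ = √(2 / (v * π)) * ((√n)⁻¹ * σw ^ 2 * √Var[fun y ↦ τ y ^ 2; gaussianReal 0 K]) := by
        rw [hS_var, Real.sqrt_mul n.cast_nonneg]
        field_simp

theorem dW1_shallowNetworkLaw_le_sqrt_integral_mul_deriv_sq {d n : ℕ} (hn : n ≠ 0)
    (x : Fin d → ℝ) (σw σb : ℝ) {τ : ℝ → ℝ} (hτ : Differentiable ℝ τ) {K v : ℝ≥0}
    (hK : (K : ℝ) = σw ^ 2 * ∑ i, x i ^ 2 + σb ^ 2)
    (hv : (v : ℝ) = σw ^ 2 * ∫ y, τ y ^ 2 ∂gaussianReal 0 K + σb ^ 2) (hv_pos : 0 < v)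
    (hτ_mul : MemLp (fun y ↦ τ y * deriv τ y) 2 (gaussianReal 0 K)) :
    dW1 (shallowNetworkLaw n x σw σb τ) (gaussianReal 0 v)
      ≤ (√n)⁻¹ * √(8 / (v * π)) * σw ^ 2 * √K
        * √(∫ y, (τ y * deriv τ y) ^ 2 ∂gaussianReal 0 K) := by
  have hsqrt_eight : √(8 / (v * π)) = √(2 / (v * π)) * √4 := by
    rw [← Real.sqrt_mul (by positivity)]
    ring_nf
  calc dW1 (shallowNetworkLaw n x σw σb τ) (gaussianReal 0 v)
      ≤ √(2 / (v * π)) * ((√n)⁻¹ * σw ^ 2 * √Var[fun y ↦ τ y ^ 2; gaussianReal 0 K]) :=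
        dW1_shallowNetworkLaw_le_sqrt_variance hn x σw σb hτ.continuous.measurable hK hv hv_pos
          (memLp_sq_gaussianReal_of_mul_deriv hτ hτ_mul)
    _ ≤ √(2 / (v * π)) * ((√n)⁻¹ * σw ^ 2
          * √(4 * K * ∫ y, (τ y * deriv τ y) ^ 2 ∂gaussianReal 0 K)) := by
        gcongr
        exact variance_sq_le_gaussianReal hτ hτ_mul
    _ = (√n)⁻¹ * √(8 / (v * π)) * σw ^ 2 * √K
          * √(∫ y, (τ y * deriv τ y) ^ 2 ∂gaussianReal 0 K) := by
        rw [hsqrt_eight, Real.sqrt_mul (by positivity), Real.sqrt_mul zero_le_four]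
        ring

theorem dW1_shallowNetworkLaw_le_sqrt_integral_mul_deriv_sq_comp_mul {d n : ℕ} (hn : n ≠ 0)
    (x : Fin d → ℝ) (σw σb : ℝ) {τ : ℝ → ℝ} (hτ : Differentiable ℝ τ) {Γ : ℝ}
    (hΓ : Γ = √(σw ^ 2 * ∑ i, x i ^ 2 + σb ^ 2)) {σ2 : ℝ}
    (hσ2 : σ2 = σw ^ 2 * ∫ z, τ (Γ * z) ^ 2 ∂gaussianReal 0 1 + σb ^ 2) (hσ2_pos : 0 < σ2)
    (hτ_mul : MemLp (fun z ↦ τ (Γ * z) * deriv τ (Γ * z)) 2 (gaussianReal 0 1)) :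
    dW1 (shallowNetworkLaw n x σw σb τ) (gaussianReal 0 σ2.toNNReal)
      ≤ (√n)⁻¹ * √(8 / (σ2 * π)) * σw ^ 2 * Γ
        * √(∫ z, (τ (Γ * z) * deriv τ (Γ * z)) ^ 2 ∂gaussianReal 0 1) := by
  have hmap : (gaussianReal 0 1).map (Γ * ·) = gaussianReal 0 (Γ ^ 2).toNNReal :=
    gaussianReal_zero_one_map_const_mul Γ
  have hchange {f : ℝ → ℝ} (hf : Measurable f) :
      ∫ y, f y ∂gaussianReal 0 (Γ ^ 2).toNNReal = ∫ z, f (Γ * z) ∂gaussianReal 0 1 := by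
    rw [← hmap, integral_map (by fun_prop) hf.aestronglyMeasurable]
  have hτ_meas : Measurable τ := hτ.continuous.measurable
  have hτ_mul_meas : Measurable fun y ↦ τ y * deriv τ y := hτ_meas.mul (measurable_deriv τ)
  have hτ_mul' : MemLp (fun y ↦ τ y * deriv τ y) 2 (gaussianReal 0 (Γ ^ 2).toNNReal) := by
    rw [← hmap]
    exact (memLp_map_measure_iff hτ_mul_meas.aestronglyMeasurable (by fun_prop)).2 hτ_mul
  have hK : ((Γ ^ 2).toNNReal : ℝ) = σw ^ 2 * ∑ i, x i ^ 2 + σb ^ 2 := by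
    rw [Real.coe_toNNReal _ (sq_nonneg Γ), hΓ, Real.sq_sqrt (by positivity)]
  have hv : (σ2.toNNReal : ℝ)
      = σw ^ 2 * ∫ y, τ y ^ 2 ∂gaussianReal 0 (Γ ^ 2).toNNReal + σb ^ 2 := by
    rw [Real.coe_toNNReal _ hσ2_pos.le, hσ2, hchange (hτ_meas.pow_const 2)]
  have hbound := dW1_shallowNetworkLaw_le_sqrt_integral_mul_deriv_sq hn x σw σb hτ hK hv
    (Real.toNNReal_pos.2 hσ2_pos) hτ_mul'
  rwa [hchange (hτ_mul_meas.pow_const 2), Real.coe_toNNReal _ hσ2_pos.le,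
    Real.coe_toNNReal _ (sq_nonneg Γ), Real.sqrt_sq (hΓ ▸ Real.sqrt_nonneg _)] at hbound

end NetworkLaw

theorem gaussian_nn_wasserstein_bound_general {d n : ℕ} (hn : n ≠ 0) (x : Fin d → ℝ)
    (σw σb : ℝ) {τ g : ℝ → ℝ} (hτ : Differentiable ℝ τ) (hτg : ∀ y, |τ y| ≤ g y)
    (hτ'g : ∀ y, |deriv τ y| ≤ g y) {Γ : ℝ} (hΓ : Γ = √(σw ^ 2 * ∑ i, x i ^ 2 + σb ^ 2))
    (hg : MemLp (fun z ↦ g (Γ * z)) 4 (gaussianReal 0 1)) {σ2 : ℝ}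
    (hσ2 : σ2 = σw ^ 2 * ∫ z, τ (Γ * z) ^ 2 ∂gaussianReal 0 1 + σb ^ 2) (hσ2_pos : 0 < σ2) :
    dW1 (shallowNetworkLaw n x σw σb τ) (gaussianReal 0 σ2.toNNReal)
      ≤ (√n)⁻¹ * √(8 / (σ2 * π)) * σw ^ 2 * Γ
        * ((∫ z, g (Γ * z) ^ 4 ∂gaussianReal 0 1) ^ ((1 : ℝ) / 4)) ^ 2 := by
  have hτ_mul : MemLp (fun z ↦ τ (Γ * z) * deriv τ (Γ * z)) 2 (gaussianReal 0 1) :=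
    memLp_mul_of_abs_le (hτ.continuous.comp (continuous_const_mul Γ)).aestronglyMeasurable
      ((measurable_deriv τ).comp (measurable_const_mul Γ)).aestronglyMeasurable hg
      (fun z ↦ hτg (Γ * z)) fun z ↦ hτ'g (Γ * z)
  have hΓ_nonneg : 0 ≤ Γ := hΓ ▸ Real.sqrt_nonneg _
  refine (dW1_shallowNetworkLaw_le_sqrt_integral_mul_deriv_sq_comp_mul hn x σw σb hτ hΓ hσ2
    hσ2_pos hτ_mul).trans ?_
  gcongr
  exact sqrt_integral_mul_sq_le_of_abs_le hg (fun z ↦ hτg (Γ * z)) fun z ↦ hτ'g (Γ * z)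

theorem gaussian_nn_wasserstein_bound
    (d : ℕ) (hd : 1 ≤ d) (x : Fin d → ℝ) (σw σb : ℝ) (hσw : 0 < σw) (hσb : 0 < σb)
    (τ : ℝ → ℝ) (a b γ : ℝ) (ha : 0 ≤ a) (hb : 0 ≤ b) (hγ : 0 ≤ γ)
    (hτ : ContDiff ℝ 2 τ)
    (hτ0 : ∀ y : ℝ, |τ y| ≤ a + b * |y| ^ γ)
    (hτ1 : ∀ y : ℝ, |deriv τ y| ≤ a + b * |y| ^ γ)
    (hτ2 : ∀ y : ℝ, |deriv (deriv τ) y| ≤ a + b * |y| ^ γ)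
    (Γ : ℝ) (hΓ : Γ = Real.sqrt (σw ^ 2 * (∑ i, (x i) ^ 2) + σb ^ 2))
    (σ2 : ℝ) (hσ2 : σ2 = σw ^ 2 * (∫ z, (τ (Γ * z)) ^ 2 ∂gaussianReal 0 1) + σb ^ 2)
    (n : ℕ) (hn : 1 ≤ n) :
    dW1
      (Measure.map
        (fun ω : (Fin n → ℝ) × (Fin n → (Fin d → ℝ)) × (Fin n → ℝ) × ℝ =>
          (Real.sqrt n)⁻¹ * σw *
              (∑ j, ω.1 j * τ (σw * (∑ i, ω.2.1 j i * x i) + σb * ω.2.2.1 j))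
            + σb * ω.2.2.2)
        ((Measure.pi fun _ : Fin n => gaussianReal 0 1).prod
          ((Measure.pi fun _ : Fin n => Measure.pi fun _ : Fin d => gaussianReal 0 1).prod
            ((Measure.pi fun _ : Fin n => gaussianReal 0 1).prod (gaussianReal 0 1)))))
      (gaussianReal 0 σ2.toNNReal)
      ≤ (Real.sqrt n)⁻¹
        * (Real.sqrt (8 / (σ2 * π)))
        * σw ^ 2
        * Real.sqrt (Γ ^ 2 + Γ ^ 4 * (2 + Real.sqrt (3 * (1 + 2 * Γ ^ 2 + 3 * Γ ^ 4))))
        * ((∫ z, (a + b * |Γ * z| ^ γ) ^ 4 ∂gaussianReal 0 1) ^ ((1:ℝ)/4)) ^ 2 := by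
  have hσ2_pos : 0 < σ2 := by
    rw [hσ2]
    positivity
  have henvelope : MemLp (fun z ↦ a + b * |Γ * z| ^ γ) 4 (gaussianReal 0 1) :=
    (memLp_const_add_mul_abs_rpow_gaussianReal a b hγ 0 (Γ ^ 2).toNNReal 4).comp_measurePreserving
      ⟨measurable_const_mul Γ, gaussianReal_zero_one_map_const_mul Γ⟩
  have hΓ_le : Γ ≤ √(Γ ^ 2 + Γ ^ 4 * (2 + √(3 * (1 + 2 * Γ ^ 2 + 3 * Γ ^ 4)))) :=
    Real.le_sqrt_of_sq_le (le_add_of_nonneg_right (by positivity))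
  refine (gaussian_nn_wasserstein_bound_general (g := fun y ↦ a + b * |y| ^ γ)
    (Nat.one_le_iff_ne_zero.1 hn) x σw σb (hτ.differentiable two_ne_zero) hτ0 hτ1 hΓ henvelope hσ2
    hσ2_pos).trans ?_
  gcongr
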